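/- Let G be a finite simple graph on vertex set V, let r = max{|A| : A a stable set of G}, and let B(G) = {A : A stable in G and |A| = r}. Let A, B ∈ B(G) be distinct. Then e_A and e_B form an edge of the Birkhoff polytope BP(G) (i.e., the segment [e_A, e_B] is a face of BP(G)) if and only if for all C, D ∈ B(G), the equality e_A + e_B = e_C + e_D implies {A, B} = {C, D}. -/

import Mathlib

variable {V : Type*} [Fintype V] [DecidableEq V]

/-- Indicator vector of a finite set of vertices. -/
def indVec (A : Finset V) : V → ℝ := fun v => if v ∈ A then 1 else 0

/-- A set of vertices is stable if no two of its elements are adjacent. -/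
def IsStable (G : SimpleGraph V) (A : Finset V) : Prop :=
  ∀ v ∈ A, ∀ w ∈ A, ¬ G.Adj v w

/-- Birkhoff polytope of `G` of rank `r`: convex hull of the indicator vectors of the
stable sets of cardinality `r`. -/
def BP (G : SimpleGraph V) (r : ℕ) : Set (V → ℝ) :=
  convexHull ℝ {x | ∃ A : Finset V, IsStable G A ∧ A.card = r ∧ x = indVec A}

/-!
If `e_A + e_B = e_C + e_D`, then the midpoint of `[e_A, e_B]` is also the midpoint of
`[e_C, e_D]`, so an extreme `[e_A, e_B]` contains `e_C`; since `e_C` is a vertex of the cube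
`[0, 1]^V`, it is `e_A` or `e_B`.

Conversely, consider the face cut out by all valid linear inequalities that are tight at both `e_A`
and `e_B`. Among them are `x_v ≤ 1` for `v ∈ A ∩ B`, `0 ≤ x_v` for `v ∉ A ∪ B`, and
`x_v + x_w ≤ 1` for adjacent `v ∈ A`, `w ∈ B`. Their tightness at `e_C` says exactly that the set
`D` complementary to `C` in the multiset sum of `A` and `B` exists and is stable, so uniqueness of
the decomposition leaves only `e_A` and `e_B` as vertices of this face.
-/

open Set

section Convexity

variable {𝕜 E : Type*} [Semiring 𝕜] [PartialOrder 𝕜] [AddCommMonoid E] [Module 𝕜 E]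

theorem subset_convexHull_inter_of_isExtreme {S F : Set E}
    (hF : IsExtreme 𝕜 (convexHull 𝕜 S) F) : F ⊆ convexHull 𝕜 (S ∩ F) := by
  have convex_good : Convex 𝕜 {x ∈ convexHull 𝕜 S | x ∈ F → x ∈ convexHull 𝕜 (S ∩ F)} := by
    refine convex_iff_forall_pos.2 fun x ⟨hxS, hx⟩ y ⟨hyS, hy⟩ a b ha hb hab => ?_
    refine ⟨convex_convexHull 𝕜 S hxS hyS ha.le hb.le hab, fun hzF => ?_⟩
    have hz : a • x + b • y ∈ openSegment 𝕜 x y := ⟨a, b, ha, hb, hab, rfl⟩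
    exact convex_convexHull 𝕜 _ (hx (hF.left_mem_of_mem_openSegment hxS hyS hzF hz))
      (hy (hF.right_mem_of_mem_openSegment hxS hyS hzF hz)) ha.le hb.le hab
  have good_of_mem : S ⊆ {x ∈ convexHull 𝕜 S | x ∈ F → x ∈ convexHull 𝕜 (S ∩ F)} :=
    fun s hs => ⟨subset_convexHull 𝕜 S hs, fun hsF => subset_convexHull 𝕜 _ ⟨hs, hsF⟩⟩
  exact fun x hx => (convexHull_min good_of_mem convex_good (hF.subset hx)).2 hx

theorem convexHull_inter_eq_of_isExtreme {S F : Set E}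
    (hF : IsExtreme 𝕜 (convexHull 𝕜 S) F) (hconv : Convex 𝕜 F) : convexHull 𝕜 (S ∩ F) = F :=
  (convexHull_min inter_subset_right hconv).antisymm (subset_convexHull_inter_of_isExtreme hF)

variable (𝕜) in
/-- The face of `P` cut out by all linear inequalities valid on `P` that are tight on `T`. It is
defined by the inequalities themselves, with no finiteness or topology, so it need not be
exposed. -/
def tightFace (P T : Set E) : Set E :=
  {x ∈ P | ∀ (f : E →ₗ[𝕜] 𝕜) (c : 𝕜), (∀ y ∈ P, f y ≤ c) → (∀ t ∈ T, f t = c) → f x = c}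

theorem subset_tightFace {P T : Set E} (hTP : T ⊆ P) : T ⊆ tightFace 𝕜 P T :=
  fun t ht => ⟨hTP ht, fun _ _ _ htight => htight t ht⟩

theorem convex_tightFace {P : Set E} (hP : Convex 𝕜 P) (T : Set E) :
    Convex 𝕜 (tightFace 𝕜 P T) := by
  rintro x ⟨hxP, hx⟩ y ⟨hyP, hy⟩ a b ha hb hab
  refine ⟨hP hxP hyP ha hb hab, fun f c hvalid htight => ?_⟩
  rw [map_add, map_smul, map_smul, hx f c hvalid htight, hy f c hvalid htight,
    Convex.combo_self hab]

variable [IsStrictOrderedRing 𝕜]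

theorem isExtreme_tightFace (P T : Set E) : IsExtreme 𝕜 P (tightFace 𝕜 P T) := by
  refine ⟨fun x hx => hx.1, ?_⟩
  rintro x hxP y hyP _ ⟨-, hz⟩ ⟨a, b, ha, hb, hab, rfl⟩
  refine ⟨hxP, fun f c hvalid htight => (hvalid x hxP).eq_of_not_lt fun hlt => ?_⟩
  have combo_lt : f (a • x + b • y) < c := calc
    f (a • x + b • y) = a * f x + b * f y := by simp only [map_add, map_smul, smul_eq_mul]
    _ < a * c + b * c := add_lt_add_of_lt_of_le (mul_lt_mul_of_pos_left hlt ha)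
      (mul_le_mul_of_nonneg_left (hvalid y hyP) hb.le)
    _ = c := by rw [← add_mul, hab, one_mul]
  exact combo_lt.ne (hz f c hvalid htight)

theorem isExtreme_convexHull_of_inter_tightFace_subset {S T : Set E} (hTS : T ⊆ S)
    (h : S ∩ tightFace 𝕜 (convexHull 𝕜 S) T ⊆ T) :
    IsExtreme 𝕜 (convexHull 𝕜 S) (convexHull 𝕜 T) := by
  have hface := isExtreme_tightFace (𝕜 := 𝕜) (convexHull 𝕜 S) T
  have hinter : S ∩ tightFace 𝕜 (convexHull 𝕜 S) T = T :=
    h.antisymm (subset_inter hTS (subset_tightFace (hTS.trans (subset_convexHull 𝕜 S))))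
  have heq := convexHull_inter_eq_of_isExtreme hface (convex_tightFace (convex_convexHull 𝕜 S) T)
  rw [hinter] at heq
  rwa [heq]

theorem apply_eq_of_mem_tightFace_convexHull {S T : Set E} {x : E}
    (hx : x ∈ tightFace 𝕜 (convexHull 𝕜 S) T) (f : E →ₗ[𝕜] 𝕜) {c : 𝕜}
    (hvalid : ∀ s ∈ S, f s ≤ c) (htight : ∀ t ∈ T, f t = c) : f x = c :=
  hx.2 f c (fun _ hy => convexHull_min hvalid (convex_halfSpace_le f.isLinear c) hy) htight

end Convexity

theorem left_mem_segment_of_isExtreme_of_add_eq {𝕜 E : Type*} [Ring 𝕜] [LinearOrder 𝕜]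
    [IsStrictOrderedRing 𝕜] [Invertible (2 : 𝕜)] [AddCommGroup E] [Module 𝕜 E]
    {P : Set E} {a b c d : E} (h : IsExtreme 𝕜 P (segment 𝕜 a b)) (hc : c ∈ P)
    (hd : d ∈ P) (hadd : a + b = c + d) :
    c ∈ segment 𝕜 a b := by
  have hmid : midpoint 𝕜 a b = midpoint 𝕜 c d := by
    rw [midpoint_eq_smul_add, midpoint_eq_smul_add, hadd]
  refine h.left_mem_of_mem_openSegment hc hd (midpoint_mem_segment a b) ?_
  rw [hmid]
  exact midpoint_mem_openSegment c d

section IndicatorVectors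

variable {α : Type*} [DecidableEq α] {A B C : Finset α}

theorem indVec_nonneg (A : Finset α) (v : α) : 0 ≤ indVec A v := by
  unfold indVec; split_ifs <;> norm_num

theorem indVec_le_one (A : Finset α) (v : α) : indVec A v ≤ 1 := by
  unfold indVec; split_ifs <;> norm_num

theorem indVec_eq_one_iff {v : α} : indVec A v = 1 ↔ v ∈ A := by
  simp [indVec]

theorem indVec_eq_zero_iff {v : α} : indVec A v = 0 ↔ v ∉ A := by
  simp [indVec]

theorem indVec_injective : Function.Injective (indVec : Finset α → α → ℝ) := fun A B h => by
  ext v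
  rw [← indVec_eq_one_iff, h, indVec_eq_one_iff]

theorem indVec_mem_extremePoints_cube (A : Finset α) :
    indVec A ∈ (univ.pi fun _ : α => Icc (0 : ℝ) 1).extremePoints ℝ := by
  rw [extremePoints_pi]
  intro v _
  rw [extremePoints_Icc zero_le_one]
  unfold indVec
  split_ifs <;> simp

theorem eq_or_eq_of_indVec_mem_segment (h : indVec C ∈ segment ℝ (indVec A) (indVec B)) :
    C = A ∨ C = B := by
  have mem_cube (A : Finset α) := (indVec_mem_extremePoints_cube A).1
  have hC := (mem_extremePoints_iff_forall_segment.1 (indVec_mem_extremePoints_cube C)).2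
  exact (hC _ (mem_cube A) _ (mem_cube B) h).imp (fun h => (indVec_injective h).symm)
    fun h => (indVec_injective h).symm

theorem inter_subset_of_mem_tightFace {𝓕 : Set (Finset α)}
    (h : indVec C ∈ tightFace ℝ (convexHull ℝ (indVec '' 𝓕)) {indVec A, indVec B}) :
    A ∩ B ⊆ C := by
  intro v hv
  obtain ⟨hvA, hvB⟩ := Finset.mem_inter.1 hv
  refine indVec_eq_one_iff.1 <|
    apply_eq_of_mem_tightFace_convexHull h (LinearMap.proj v : (α → ℝ) →ₗ[ℝ] ℝ) ?_ ?_
  · rintro _ ⟨D, -, rfl⟩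
    exact indVec_le_one D v
  · rintro _ (rfl | rfl)
    exacts [indVec_eq_one_iff.2 hvA, indVec_eq_one_iff.2 hvB]

theorem subset_union_of_mem_tightFace {𝓕 : Set (Finset α)}
    (h : indVec C ∈ tightFace ℝ (convexHull ℝ (indVec '' 𝓕)) {indVec A, indVec B}) :
    C ⊆ A ∪ B := by
  intro v hvC
  by_contra hv
  rw [Finset.notMem_union] at hv
  have htight : -indVec C v = 0 := by
    refine apply_eq_of_mem_tightFace_convexHull h (-(LinearMap.proj v : (α → ℝ) →ₗ[ℝ] ℝ)) ?_ ?_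
    · rintro _ ⟨D, -, rfl⟩
      exact neg_nonpos.2 (indVec_nonneg D v)
    · rintro _ (rfl | rfl)
      exacts [neg_eq_zero.2 (indVec_eq_zero_iff.2 hv.1), neg_eq_zero.2 (indVec_eq_zero_iff.2 hv.2)]
  exact indVec_eq_zero_iff.1 (neg_eq_zero.1 htight) hvC

/-- The complement of `C` in the multiset sum of `A` and `B`: for `A ∩ B ⊆ C ⊆ A ∪ B` it is the
only candidate for a set `D` with `e_A + e_B = e_C + e_D`. -/
def sumComplement (A B C : Finset α) : Finset α := A ∩ B ∪ (A ∪ B) \ C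

theorem indVec_add_indVec_sumComplement (hinter : A ∩ B ⊆ C) (hunion : C ⊆ A ∪ B) :
    indVec C + indVec (sumComplement A B C) = indVec A + indVec B := by
  ext v
  have hv_inter := @hinter v
  have hv_union := @hunion v
  by_cases hA : v ∈ A <;> by_cases hB : v ∈ B <;> by_cases hC : v ∈ C <;>
    simp_all [indVec, sumComplement]

theorem card_add_card_sumComplement (hinter : A ∩ B ⊆ C) (hunion : C ⊆ A ∪ B) :
    C.card + (sumComplement A B C).card = A.card + B.card := by
  have hdisj : Disjoint (A ∩ B) ((A ∪ B) \ C) := Finset.disjoint_sdiff.mono_left hinter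
  have hsdiff := Finset.card_sdiff_add_card_eq_card hunion
  have hAB := Finset.card_union_add_card_inter A B
  rw [sumComplement, Finset.card_union_of_disjoint hdisj]
  lia

end IndicatorVectors

section StableSets

variable {α : Type*} [DecidableEq α] {G : SimpleGraph α} {r : ℕ} {A B C : Finset α}

theorem isStable_sumComplement (hA : IsStable G A) (hB : IsStable G B)
    (hcover : ∀ v ∈ A, ∀ w ∈ B, G.Adj v w → v ∈ C ∨ w ∈ C) :
    IsStable G (sumComplement A B C) := by
  have not_adj_of_mem_inter {v w : α} (hv : v ∈ A ∩ B) (hw : w ∈ sumComplement A B C) :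
      ¬ G.Adj v w := by
    have hw_union : w ∈ A ∪ B := by grind [sumComplement]
    obtain ⟨hvA, hvB⟩ := Finset.mem_inter.1 hv
    exact (Finset.mem_union.1 hw_union).elim (hA v hvA w) (hB v hvB w)
  intro v hv w hw hvw
  rcases Finset.mem_union.1 hv with hv_inter | hv_diff
  · exact not_adj_of_mem_inter hv_inter hw hvw
  rcases Finset.mem_union.1 hw with hw_inter | hw_diff
  · exact not_adj_of_mem_inter hw_inter hv hvw.symm
  obtain ⟨hv_union, hvC⟩ := Finset.mem_sdiff.1 hv_diff
  obtain ⟨hw_union, hwC⟩ := Finset.mem_sdiff.1 hw_diff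
  rcases Finset.mem_union.1 hv_union with hvA | hvB <;>
    rcases Finset.mem_union.1 hw_union with hwA | hwB
  · exact hA v hvA w hwA hvw
  · exact (hcover v hvA w hwB hvw).elim hvC hwC
  · exact (hcover w hwA v hvB hvw.symm).elim hwC hvC
  · exact hB v hvB w hwB hvw

theorem indVec_add_indVec_le_one_of_adj (hA : IsStable G A) {v w : α} (hvw : G.Adj v w) :
    indVec A v + indVec A w ≤ 1 := by
  by_cases hv : v ∈ A
  · rw [indVec_eq_zero_iff.2 fun hw => hA v hv w hw hvw, add_zero]
    exact indVec_le_one A v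
  · rw [indVec_eq_zero_iff.2 hv, zero_add]
    exact indVec_le_one A w

/-- The stable sets of cardinality `r`, written `B(G)` when `r` is the stability number of `G`. -/
def stableSets (G : SimpleGraph α) (r : ℕ) : Set (Finset α) :=
  {A | IsStable G A ∧ A.card = r}

theorem BP_eq_convexHull_image (G : SimpleGraph α) (r : ℕ) :
    BP G r = convexHull ℝ (indVec '' stableSets G r) := by
  simp only [BP, stableSets, image, mem_ofPred_eq, and_assoc, eq_comm]

theorem indVec_mem_BP (hA : A ∈ stableSets G r) : indVec A ∈ BP G r := by
  rw [BP_eq_convexHull_image]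
  exact subset_convexHull ℝ _ (mem_image_of_mem indVec hA)

theorem sumComplement_mem_stableSets (hA : A ∈ stableSets G r) (hB : B ∈ stableSets G r)
    (hC : C ∈ stableSets G r) (hinter : A ∩ B ⊆ C) (hunion : C ⊆ A ∪ B)
    (hcover : ∀ v ∈ A, ∀ w ∈ B, G.Adj v w → v ∈ C ∨ w ∈ C) :
    sumComplement A B C ∈ stableSets G r := by
  refine ⟨isStable_sumComplement hA.1 hB.1 hcover, ?_⟩
  have hcard := card_add_card_sumComplement hinter hunion
  rw [hA.2, hB.2, hC.2] at hcard
  exact Nat.add_left_cancel hcard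

theorem mem_or_mem_of_mem_tightFace
    (h : indVec C ∈ tightFace ℝ (convexHull ℝ (indVec '' stableSets G r)) {indVec A, indVec B})
    (hA : IsStable G A) (hB : IsStable G B) :
    ∀ v ∈ A, ∀ w ∈ B, G.Adj v w → v ∈ C ∨ w ∈ C := by
  intro v hvA w hwB hvw
  have hwA : w ∉ A := fun hwA => hA v hvA w hwA hvw
  have hvB : v ∉ B := fun hvB => hB v hvB w hwB hvw
  have htight : indVec C v + indVec C w = 1 := by
    refine apply_eq_of_mem_tightFace_convexHull h
      ((LinearMap.proj v : (α → ℝ) →ₗ[ℝ] ℝ) + LinearMap.proj w) ?_ ?_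
    · rintro _ ⟨D, hD, rfl⟩
      exact indVec_add_indVec_le_one_of_adj hD.1 hvw
    · rintro _ (rfl | rfl) <;> simp [indVec, *]
  by_contra! hC
  simp [indVec, hC] at htight

theorem exists_indVec_add_eq_of_mem_tightFace
    (h : indVec C ∈ tightFace ℝ (convexHull ℝ (indVec '' stableSets G r)) {indVec A, indVec B})
    (hA : A ∈ stableSets G r) (hB : B ∈ stableSets G r) (hC : C ∈ stableSets G r) :
    ∃ D ∈ stableSets G r, indVec A + indVec B = indVec C + indVec D := by
  have hinter := inter_subset_of_mem_tightFace h
  have hunion := subset_union_of_mem_tightFace h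
  have hcover := mem_or_mem_of_mem_tightFace h hA.1 hB.1
  exact ⟨sumComplement A B C, sumComplement_mem_stableSets hA hB hC hinter hunion hcover,
    (indVec_add_indVec_sumComplement hinter hunion).symm⟩

theorem pair_eq_pair_of_isExtreme_segment {D : Finset α}
    (hext : IsExtreme ℝ (BP G r) (segment ℝ (indVec A) (indVec B)))
    (hC : C ∈ stableSets G r) (hD : D ∈ stableSets G r)
    (hadd : indVec A + indVec B = indVec C + indVec D) :
    ({A, B} : Set (Finset α)) = {C, D} := by
  have hmem : indVec C ∈ segment ℝ (indVec A) (indVec B) :=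
    left_mem_segment_of_isExtreme_of_add_eq hext (indVec_mem_BP hC) (indVec_mem_BP hD) hadd
  rcases eq_or_eq_of_indVec_mem_segment hmem with rfl | rfl
  · rw [indVec_injective (add_left_cancel hadd)]
  · rw [add_comm] at hadd
    rw [indVec_injective (add_left_cancel hadd), pair_comm]

theorem isExtreme_segment_of_unique_sum (hA : A ∈ stableSets G r) (hB : B ∈ stableSets G r)
    (hunique : ∀ C D : Finset α, C ∈ stableSets G r → D ∈ stableSets G r →
      indVec A + indVec B = indVec C + indVec D → ({A, B} : Set (Finset α)) = {C, D}) :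
    IsExtreme ℝ (BP G r) (segment ℝ (indVec A) (indVec B)) := by
  rw [BP_eq_convexHull_image, ← convexHull_pair]
  refine isExtreme_convexHull_of_inter_tightFace_subset
    (pair_subset (mem_image_of_mem indVec hA) (mem_image_of_mem indVec hB)) ?_
  rintro _ ⟨⟨C, hC, rfl⟩, hface⟩
  obtain ⟨D, hD, hadd⟩ := exists_indVec_add_eq_of_mem_tightFace hface hA hB hC
  have hCAB : C ∈ ({A, B} : Set (Finset α)) := by
    rw [hunique C D hC hD hadd]
    exact mem_insert C {D}
  rw [← image_pair]
  exact mem_image_of_mem indVec hCAB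

theorem edge_BP_iff_general (hA : A ∈ stableSets G r) (hB : B ∈ stableSets G r) :
    IsExtreme ℝ (BP G r) (segment ℝ (indVec A) (indVec B)) ↔
      ∀ C D : Finset α, C ∈ stableSets G r → D ∈ stableSets G r →
        indVec A + indVec B = indVec C + indVec D →
          ({A, B} : Set (Finset α)) = {C, D} :=
  ⟨fun hext _ _ => pair_eq_pair_of_isExtreme_segment hext, isExtreme_segment_of_unique_sum hA hB⟩

end StableSets

/-- Two distinct vertices `e_A`, `e_B` of the Birkhoff polytope of `G` form an edge iff
`e_A + e_B` has a unique decomposition as a sum of two vertices of `BP(G)`. -/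
theorem edge_BP_iff (G : SimpleGraph V) (r : ℕ)
    (hr : IsGreatest {n : ℕ | ∃ A : Finset V, IsStable G A ∧ A.card = n} r)
    (A B : Finset V) (hA : IsStable G A ∧ A.card = r) (hB : IsStable G B ∧ B.card = r)
    (hAB : A ≠ B) :
    IsExtreme ℝ (BP G r) (segment ℝ (indVec A) (indVec B)) ↔
      ∀ C D : Finset V, IsStable G C ∧ C.card = r → IsStable G D ∧ D.card = r →
        indVec A + indVec B = indVec C + indVec D →
          ({A, B} : Set (Finset V)) = {C, D} :=
  edge_BP_iff_general hA hB
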